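/- arXiv:2308.10872 — 2 statements merged into one kernel-verified Lean document; each statement's English description precedes it below -/
import Mathlib

section
/- In every decomposition of K_6 minus a perfect matching F into 4-cycles, at least one 4-cycle (w,x,y,z) has both diagonals in F, i.e., {w,y} ∈ F and {x,z} ∈ F. -/
/-!
The graph `K_6 - F` is the octahedron with antipodal pairs `F`; write `m` for the antipodal map.
Let `(p, q, r, s)` be a cycle of the decomposition. Its four vertices meet only three pairs of `F`,
so one of its diagonals, say `{q, s}`, lies in `F` (`diagonal_of_four`). If the other one does not,
put `a = m p` and `b = m r`, so that the six vertices are `p, q, r, s, a, b`. The edges at `q` and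
at `s` not in the first cycle go to `a` and `b`, so the cycle through `{a, q}` is `(a, q, b, s)`.
The cycle through `{a, b}` then has to avoid `q` and `s`, hence is `(a, b, p, r)`, and its diagonals
`{a, p}` and `{b, r}` lie in `F` (`of_one_diagonal`).
-/

open Finset

/-- The edge set of the 4-cycle `(a, b, c, d)`. -/
def cyc {V : Type} [DecidableEq V] (a b c d : V) : Finset (Sym2 V) :=
  {s(a, b), s(b, c), s(c, d), s(d, a)}

/-- A finite set of edges forms a 4-cycle. -/
def IsCycle4 {V : Type} [DecidableEq V] (E : Finset (Sym2 V)) : Prop :=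
  ∃ a b c d : V, a ≠ b ∧ a ≠ c ∧ a ≠ d ∧ b ≠ c ∧ b ≠ d ∧ c ≠ d ∧ E = cyc a b c d

/-- Total edge set of a family of cycles. -/
def edgesOf {V : Type} [DecidableEq V] (T : Finset (Finset (Sym2 V))) : Finset (Sym2 V) :=
  T.biUnion id

/-- A family of pairwise edge-disjoint 4-cycles. -/
def EdgeDisjointFamily {V : Type} [DecidableEq V] (T : Finset (Finset (Sym2 V))) : Prop :=
  (∀ E ∈ T, IsCycle4 E) ∧ (T : Set (Finset (Sym2 V))).Pairwise Disjoint

/-- A 4-cycle bitrade. -/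
def IsBitrade {V : Type} [DecidableEq V] (T1 T2 : Finset (Finset (Sym2 V))) : Prop :=
  EdgeDisjointFamily T1 ∧ EdgeDisjointFamily T2 ∧ Disjoint T1 T2 ∧ edgesOf T1 = edgesOf T2

/-- The foundation: the number of vertices covered by the cycles of the family. -/
noncomputable def foundation {V : Type} [DecidableEq V] (T : Finset (Finset (Sym2 V))) : ℕ :=
  {v : V | ∃ E ∈ T, ∃ e ∈ E, v ∈ e}.ncard

/-- `F` is a perfect matching of `K_6` (on `Fin 6`). -/
def IsPerfectMatching6 (F : Finset (Sym2 (Fin 6))) : Prop :=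
  (∀ e ∈ F, ¬ e.IsDiag) ∧
  ((F : Set (Sym2 (Fin 6))).Pairwise fun e f => ∀ v, v ∈ e → v ∉ f) ∧
  ∀ v : Fin 6, ∃ e ∈ F, v ∈ e

/-- Six distinct elements exhaust `Fin 6`. -/
lemma six_cover {a b c d e f : Fin 6} (h : [a, b, c, d, e, f].Nodup) (v : Fin 6) :
    v = a ∨ v = b ∨ v = c ∨ v = d ∨ v = e ∨ v = f := by
  by_contra hv
  have h7 : [v, a, b, c, d, e, f].Nodup := by
    rw [List.nodup_cons]
    exact ⟨by simpa using hv, h⟩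
  have := h7.length_le_card
  simp at this

lemma cyc_rotate {V : Type} [DecidableEq V] (a b c d : V) : cyc a b c d = cyc b c d a := by
  ext e
  simp only [cyc, mem_insert, mem_singleton]
  tauto

lemma cyc_reverse {V : Type} [DecidableEq V] (a b c d : V) : cyc a b c d = cyc b a d c := by
  ext e
  simp only [cyc, mem_insert, mem_singleton, Sym2.eq_swap (a := b) (b := a),
    Sym2.eq_swap (a := a) (b := d), Sym2.eq_swap (a := d) (b := c), Sym2.eq_swap (a := c) (b := b)]
  tauto

/-- A 4-cycle containing the edge `{u, v}` can be written starting with `u, v`. -/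
lemma IsCycle4.exists_start {V : Type} [DecidableEq V] {E : Finset (Sym2 V)} (hE : IsCycle4 E)
    {u v : V} (h : s(u, v) ∈ E) : ∃ x y : V, [u, v, x, y].Nodup ∧ E = cyc u v x y := by
  obtain ⟨a, b, c, d, hab, hac, had, hbc, hbd, hcd, rfl⟩ := hE
  have h1 := cyc_rotate a b c d
  have h2 := cyc_rotate b c d a
  have h3 := cyc_rotate c d a b
  simp only [cyc, mem_insert, mem_singleton, Sym2.eq_iff] at h
  rcases h with (⟨rfl, rfl⟩ | ⟨rfl, rfl⟩) | (⟨rfl, rfl⟩ | ⟨rfl, rfl⟩) |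
    (⟨rfl, rfl⟩ | ⟨rfl, rfl⟩) | (⟨rfl, rfl⟩ | ⟨rfl, rfl⟩)
  · exact ⟨c, d, by simp; tauto, rfl⟩
  · exact ⟨d, c, by simp; tauto, cyc_reverse ..⟩
  · exact ⟨d, a, by simp; tauto, h1⟩
  · exact ⟨a, d, by simp; tauto, h1.trans (cyc_reverse ..)⟩
  · exact ⟨a, b, by simp; tauto, h1.trans h2⟩
  · exact ⟨b, a, by simp; tauto, (h1.trans h2).trans (cyc_reverse ..)⟩
  · exact ⟨b, c, by simp; tauto, (h1.trans h2).trans h3⟩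
  · exact ⟨c, b, by simp; tauto, ((h1.trans h2).trans h3).trans (cyc_reverse ..)⟩

/-- A perfect matching is given by its antipodal map. -/
lemma IsPerfectMatching6.exists_map {F : Finset (Sym2 (Fin 6))} (hF : IsPerfectMatching6 F) :
    ∃ m : Fin 6 → Fin 6, (∀ u v, s(u, v) ∈ F ↔ m u = v) ∧ (∀ v, m v ≠ v) ∧ ∀ v, m (m v) = v := by
  obtain ⟨hdiag, hdisj, hcov⟩ := hF
  have hex : ∀ v, ∃ w, s(v, w) ∈ F := by
    intro v
    obtain ⟨e, he, w, rfl⟩ := hcov v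
    exact ⟨w, he⟩
  choose m hm using hex
  have huniq : ∀ u v, s(u, v) ∈ F ↔ m u = v := by
    refine fun u v => ⟨fun h => ?_, fun h => h ▸ hm u⟩
    by_contra hne
    refine hdisj (hm u) h (fun heq => hne (Sym2.congr_right.1 heq)) u ?_ ?_ <;> simp
  refine ⟨m, huniq, fun v hv => hdiag _ (hm v) (by simp [hv]), fun v => ?_⟩
  rw [← huniq, Sym2.eq_swap]
  exact hm v

/-- If no side of a 4-cycle joins antipodal vertices, some diagonal does: otherwise the four
vertices and the antipodes of three of them would be seven distinct vertices. -/
lemma diagonal_of_four {m : Fin 6 → Fin 6} (hfix : ∀ v, m v ≠ v) (hinv : ∀ v, m (m v) = v)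
    {p q r s : Fin 6} (hd : [p, q, r, s].Nodup) (hpq : m p ≠ q) (hqr : m q ≠ r) (hrs : m r ≠ s)
    (hsp : m s ≠ p) : m p = r ∨ m q = s := by
  by_contra! h
  have h6 : [p, q, r, s, m p, m q].Nodup := by
    simp only [List.nodup_cons, List.mem_cons, List.not_mem_nil] at hd ⊢
    grind
  have := six_cover h6 (m r)
  simp only [List.nodup_cons, List.mem_cons, List.not_mem_nil] at hd
  grind

/-- The main case: a cycle `(p, q, r, s)` of the decomposition whose diagonal `{q, s}` is in `F`.
The hypotheses on `D` say that its members are 4-cycles (`hC`), that distinct members share no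
edge (`hU`), that they avoid the pairs `{v, m v}` (`hN`), and that they cover all other
edges (`hE`). -/
lemma of_one_diagonal {m : Fin 6 → Fin 6} (hfix : ∀ v, m v ≠ v) (hinv : ∀ v, m (m v) = v)
    {D : Finset (Finset (Sym2 (Fin 6)))} (hC : ∀ E ∈ D, IsCycle4 E)
    (hU : ∀ E ∈ D, ∀ E' ∈ D, ∀ e ∈ E, e ∈ E' → E = E')
    (hN : ∀ E ∈ D, ∀ u v, s(u, v) ∈ E → m u ≠ v)
    (hE : ∀ u v, u ≠ v → m u ≠ v → ∃ E ∈ D, s(u, v) ∈ E)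
    {p q r s : Fin 6} (hd : [p, q, r, s].Nodup) (hD : cyc p q r s ∈ D) (hqs : m q = s) :
    ∃ w x y z, [w, x, y, z].Nodup ∧ cyc w x y z ∈ D ∧ m w = y ∧ m x = z := by
  by_cases hpr : m p = r
  · exact ⟨p, q, r, s, hd, hD, hpr, hqs⟩
  obtain ⟨a, ha⟩ : ∃ a, m p = a := ⟨_, rfl⟩
  obtain ⟨b, hb⟩ : ∃ b, m r = b := ⟨_, rfl⟩
  have ha' : m a = p := ha ▸ hinv p
  have hb' : m b = r := hb ▸ hinv r
  have hsq : m s = q := hqs ▸ hinv q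
  have h6 : [p, q, r, s, a, b].Nodup := by
    simp only [List.nodup_cons, List.mem_cons, List.not_mem_nil] at hd ⊢
    grind
  have cover := six_cover h6
  simp only [List.nodup_cons, List.mem_cons, List.not_mem_nil, or_false, not_or, not_false_eq_true,
    and_true, List.nodup_nil] at h6
  obtain ⟨⟨hpq, hpr', hps, hpa, hpb⟩, ⟨hqr, hqs', hqa, hqb⟩, ⟨hrs, hra, hrb⟩, ⟨hsa, hsb⟩, hab⟩ := h6
  -- The cycle through `{a, q}` is `(a, q, b, s)`.
  have h2 : cyc a q b s ∈ D := by
    obtain ⟨E, hED, haq⟩ := hE a q (Ne.symm hqa) (by rw [ha']; exact hpq)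
    obtain ⟨x, y, hxy, rfl⟩ := (hC E hED).exists_start haq
    have hne : cyc a q x y ≠ cyc p q r s := by
      intro h
      rw [h] at haq
      simp only [cyc, mem_insert, mem_singleton, Sym2.eq_iff] at haq
      grind
    have hqx : s(q, x) ∉ cyc p q r s := fun h => hne (hU _ hED _ hD _ (by simp [cyc]) h)
    have nqx := hN _ hED q x (by simp [cyc])
    have nxy := hN _ hED x y (by simp [cyc])
    have nya := hN _ hED y a (by simp [cyc])
    simp only [cyc, mem_insert, mem_singleton, Sym2.eq_iff, not_or] at hqx
    simp only [List.nodup_cons, List.mem_cons, List.not_mem_nil] at hxy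
    have hx : x = b := by
      rcases cover x with h | h | h | h | h | h <;> subst h <;> simp_all
    subst hx
    have hy : y = s := by
      rcases cover y with h | h | h | h | h | h <;> subst h <;> simp_all
    rwa [hy] at hED
  -- The cycle through `{a, b}` is `(a, b, p, r)`.
  obtain ⟨E, hED, habE⟩ := hE a b hab (by rw [ha']; exact hpb)
  obtain ⟨x, y, hxy, rfl⟩ := (hC E hED).exists_start habE
  have hne : cyc a b x y ≠ cyc a q b s := by
    intro h
    rw [h] at habE
    simp only [cyc, mem_insert, mem_singleton, Sym2.eq_iff] at habE
    grind
  have hbx : s(b, x) ∉ cyc a q b s := fun h => hne (hU _ hED _ h2 _ (by simp [cyc]) h)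
  have hya : s(y, a) ∉ cyc a q b s := fun h => hne (hU _ hED _ h2 _ (by simp [cyc]) h)
  have nbx := hN _ hED b x (by simp [cyc])
  simp only [cyc, mem_insert, mem_singleton, Sym2.eq_iff, not_or] at hbx hya
  have hxy' := hxy
  simp only [List.nodup_cons, List.mem_cons, List.not_mem_nil] at hxy'
  have hx : x = p := by
    rcases cover x with h | h | h | h | h | h <;> subst h <;> simp_all
  have hy : y = r := by
    rcases cover y with h | h | h | h | h | h <;> subst h <;> simp_all
  exact ⟨a, b, x, y, hxy, hED, by rw [ha', hx], by rw [hb', hy]⟩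

theorem exists_cycle_with_both_diagonals_in_matching
    (F : Finset (Sym2 (Fin 6))) (hF : IsPerfectMatching6 F)
    (D : Finset (Finset (Sym2 (Fin 6)))) (hD : EdgeDisjointFamily D)
    (hcov : edgesOf D =
      ((Finset.univ : Finset (Sym2 (Fin 6))).filter fun e => ¬ e.IsDiag) \ F) :
    ∃ E ∈ D, ∃ w x y z : Fin 6,
      w ≠ x ∧ w ≠ y ∧ w ≠ z ∧ x ≠ y ∧ x ≠ z ∧ y ≠ z ∧
      E = cyc w x y z ∧ s(w, y) ∈ F ∧ s(x, z) ∈ F := by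
  obtain ⟨m, hm, hfix, hinv⟩ := hF.exists_map
  obtain ⟨hC, hdisj⟩ := hD
  have hU : ∀ E ∈ D, ∀ E' ∈ D, ∀ e ∈ E, e ∈ E' → E = E' := by
    intro E hE E' hE' e he he'
    by_contra hne
    exact Finset.disjoint_left.1 (hdisj hE hE' hne) he he'
  have hmem : ∀ u v, (∃ E ∈ D, s(u, v) ∈ E) ↔ u ≠ v ∧ m u ≠ v := by
    intro u v
    have := Finset.ext_iff.1 hcov s(u, v)
    simpa [edgesOf, hm] using this
  have hN : ∀ E ∈ D, ∀ u v, s(u, v) ∈ E → m u ≠ v := fun E hE u v h =>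
    ((hmem u v).1 ⟨E, hE, h⟩).2
  have hE : ∀ u v, u ≠ v → m u ≠ v → ∃ E ∈ D, s(u, v) ∈ E := fun u v h h' =>
    (hmem u v).2 ⟨h, h'⟩
  suffices h : ∃ w x y z, [w, x, y, z].Nodup ∧ cyc w x y z ∈ D ∧ m w = y ∧ m x = z by
    obtain ⟨w, x, y, z, hd, hD, hwy, hxz⟩ := h
    simp only [List.nodup_cons, List.mem_cons, List.not_mem_nil] at hd
    exact ⟨_, hD, w, x, y, z, by tauto, by tauto, by tauto, by tauto, by tauto, by tauto, rfl,
      (hm _ _).2 hwy, (hm _ _).2 hxz⟩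
  obtain ⟨v, hv0, hv⟩ : ∃ v : Fin 6, 0 ≠ v ∧ m 0 ≠ v := by
    generalize m 0 = t
    revert t
    decide
  obtain ⟨E, hED, hE0⟩ := hE 0 v hv0 hv
  obtain ⟨r, s, hd, rfl⟩ := (hC E hED).exists_start hE0
  rcases diagonal_of_four hfix hinv hd hv (hN _ hED _ _ (by simp [cyc]))
    (hN _ hED _ _ (by simp [cyc])) (hN _ hED _ _ (by simp [cyc])) with h | h
  · -- Rotate the cycle so that its diagonal in `F` becomes the second one.
    refine of_one_diagonal hfix hinv hC hU hN hE (p := s) (q := 0) (r := v) (s := r) ?_ ?_ h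
    · simp only [List.nodup_cons, List.mem_cons, List.not_mem_nil] at hd ⊢
      grind
    · rwa [cyc_rotate]
  · exact of_one_diagonal hfix hinv hC hU hN hE hd hED h
end

section
/- There are, up to isomorphism, exactly three 4-cycle bitrades of volume 3 and foundation 7. -/
/-! Every 4-cycle bitrade of volume 3 and foundation 7 can be relabelled so that its vertices are
`0, …, 6` and its first family contains the cycle `(0, 1, 2, 3)` (`exists_first_cycle`). A second
cycle of that family is edge-disjoint from the first one, so it shares one or two vertices with it,
and the symmetries of `(0, 1, 2, 3)` bring it into one of four forms (`normalize`,
`exists_second_cycle`). Each form leaves few possibilities for the third cycle and for the other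
family. A finite search (`search`) goes through all of them and finds each time a relabelling
into one of three representatives (`recognize`, `classification`). The representatives are pairwise
non-isomorphic because the graphs formed by their edges have 5, 4 and 7 triangles
(`triangles_reps`).

For the search, the 21 edges of the complete graph on `{0, …, 6}` are numbered and a set of edges is
encoded by the natural number whose binary digits are its indicator function, its mask. The map
`dec` sends masks to sets of edges; it turns bitwise conjunction and disjunction into intersection
and union, and a relabelling acts on masks through `permMask`. -/

open Finset

/-- Action of a permutation of the vertices on a family of cycles. -/
def actP (σ : Equiv.Perm ℕ) (T : Finset (Finset (Sym2 ℕ))) : Finset (Finset (Sym2 ℕ)) :=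
  T.image (fun E => E.image (Sym2.map ⇑σ))

/-- A 4-cycle bitrade of volume 3 and foundation 7. -/
def IsTrade37 (T1 T2 : Finset (Finset (Sym2 ℕ))) : Prop :=
  IsBitrade T1 T2 ∧ T1.card = 3 ∧ T2.card = 3 ∧ foundation T1 = 7

/-- Two bitrades are isomorphic via a vertex bijection mapping `{T1, T2}` to
`{T1', T2'}`. -/
def IsoTrades (P Q : Finset (Finset (Sym2 ℕ)) × Finset (Finset (Sym2 ℕ))) : Prop :=
  ∃ σ : Equiv.Perm ℕ,
    (actP σ P.1 = Q.1 ∧ actP σ P.2 = Q.2) ∨ (actP σ P.1 = Q.2 ∧ actP σ P.2 = Q.1)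

namespace Trade37

/-! ### Encoding sets of edges as bit masks -/

/-- The 21 pairs `a < b < 7`, in lexicographic order. -/
def edgeList : List (ℕ × ℕ) := [
  (0, 1), (0, 2), (0, 3), (0, 4), (0, 5), (0, 6), (1, 2), (1, 3), (1, 4), (1, 5), (1, 6),
  (2, 3), (2, 4), (2, 5), (2, 6), (3, 4), (3, 5), (3, 6), (4, 5), (4, 6), (5, 6)]

/-- The `i`-th pair of `edgeList`. -/
def edgeAt (i : Fin 21) : ℕ × ℕ := edgeList.getD i (0, 0)

/-- The `i`-th edge of the complete graph on `{0, …, 6}`. -/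
def edge (i : Fin 21) : Sym2 ℕ := s((edgeAt i).1, (edgeAt i).2)

/-- The mask of the single edge `ab` (for distinct `a, b < 7`); the exponent is the position of
the pair in `edgeList`. -/
def bit (a b : ℕ) : ℕ :=
  if Nat.blt a b then 2 ^ (a * (13 - a) / 2 + (b - a - 1)) else 2 ^ (b * (13 - b) / 2 + (a - b - 1))

theorem edge_injective : Function.Injective edge := by
  have h : ∀ i j, edge i = edge j → i = j := by decide +kernel
  exact h

theorem edge_lt : ∀ i, (edgeAt i).1 < (edgeAt i).2 ∧ (edgeAt i).2 < 7 := by decide +kernel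

/-- The set of edges of the complete graph on `{0, …, 6}` whose positions are the binary digits
`1` of `m`. -/
def dec (m : ℕ) : Finset (Sym2 ℕ) :=
  (univ.filter fun i : Fin 21 => m.testBit i).map ⟨edge, edge_injective⟩

theorem mem_dec {m : ℕ} {e : Sym2 ℕ} : e ∈ dec m ↔ ∃ i : Fin 21, m.testBit i ∧ edge i = e := by
  simp [dec]

theorem edge_mem_dec {m : ℕ} {i : Fin 21} : edge i ∈ dec m ↔ m.testBit i := by
  rw [mem_dec]
  constructor
  · rintro ⟨j, hj, h⟩
    rwa [← edge_injective h]
  · exact fun h => ⟨i, h, rfl⟩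

theorem lt_of_mem_dec {m : ℕ} {e : Sym2 ℕ} (he : e ∈ dec m) {v : ℕ} (hv : v ∈ e) : v < 7 := by
  obtain ⟨i, -, rfl⟩ := mem_dec.1 he
  have := edge_lt i
  rcases Sym2.mem_iff.1 hv with rfl | rfl <;> omega

theorem dec_or (m n : ℕ) : dec (m ||| n) = dec m ∪ dec n := by
  ext e
  simp only [mem_union, mem_dec, Nat.testBit_or, Bool.or_eq_true]
  constructor
  · rintro ⟨i, h | h, rfl⟩
    exacts [Or.inl ⟨i, h, rfl⟩, Or.inr ⟨i, h, rfl⟩]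
  · rintro (⟨i, h, rfl⟩ | ⟨i, h, rfl⟩)
    exacts [⟨i, Or.inl h, rfl⟩, ⟨i, Or.inr h, rfl⟩]

theorem testBit_lt {m : ℕ} (hm : m < 2 ^ 21) {k : ℕ} (h : m.testBit k) : k < 21 := by
  by_contra hk
  rw [Nat.testBit_lt_two_pow (lt_of_lt_of_le hm (Nat.pow_le_pow_right (by norm_num)
    (not_lt.1 hk)))] at h
  exact absurd h (by simp)

theorem land_eq_zero {m n : ℕ} (hm : m < 2 ^ 21) (h : Disjoint (dec m) (dec n)) : m &&& n = 0 := by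
  refine Nat.eq_of_testBit_eq fun k => ?_
  rw [Nat.zero_testBit, Nat.testBit_and, ← Bool.not_eq_true, Bool.and_eq_true]
  rintro ⟨h1, h2⟩
  exact disjoint_left.1 h (edge_mem_dec (i := ⟨k, testBit_lt hm h1⟩) |>.2 h1) (edge_mem_dec.2 h2)

theorem disjoint_dec {m n : ℕ} (h : m &&& n = 0) : Disjoint (dec m) (dec n) := by
  rw [disjoint_left]
  intro e h1 h2
  obtain ⟨i, hi, rfl⟩ := mem_dec.1 h1
  have := congrArg (fun x => Nat.testBit x i) h
  simp [hi, edge_mem_dec.1 h2] at this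

theorem dec_injOn {m n : ℕ} (hm : m < 2 ^ 21) (hn : n < 2 ^ 21) (h : dec m = dec n) : m = n := by
  refine Nat.eq_of_testBit_eq fun k => ?_
  rw [Bool.eq_iff_iff]
  constructor
  · intro hk
    have := edge_mem_dec (m := m) (i := ⟨k, testBit_lt hm hk⟩) |>.2 hk
    rw [h] at this
    exact edge_mem_dec.1 this
  · intro hk
    have := edge_mem_dec (m := n) (i := ⟨k, testBit_lt hn hk⟩) |>.2 hk
    rw [← h] at this
    exact edge_mem_dec.1 this

theorem dec_bit {a b : ℕ} (ha : a < 7) (hb : b < 7) (hab : a ≠ b) : dec (bit a b) = {s(a, b)} := by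
  have key : ∀ a b : Fin 7, a ≠ b → ∃ i : Fin 21, bit a b = 2 ^ (i : ℕ) ∧ edge i = s(↑a, ↑b) := by
    decide +kernel
  obtain ⟨i, h1, h2⟩ := key ⟨a, ha⟩ ⟨b, hb⟩ (by simpa [Fin.ext_iff] using hab)
  simp only at h1 h2
  ext e
  rw [mem_dec, h1, mem_singleton, ← h2]
  constructor
  · rintro ⟨j, hj, rfl⟩
    rw [Nat.testBit_two_pow, decide_eq_true_iff] at hj
    rw [Fin.ext hj]
  · rintro rfl
    exact ⟨i, by simp, rfl⟩

/-- The mask of the 4-cycle `(a, b, c, d)`. -/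
def mask (a b c d : ℕ) : ℕ := bit a b ||| (bit b c ||| (bit c d ||| bit d a))

theorem cyc_eq_dec {a b c d : ℕ} (ha : a < 7) (hb : b < 7) (hc : c < 7) (hd : d < 7)
    (hab : a ≠ b) (hbc : b ≠ c) (hcd : c ≠ d) (hda : d ≠ a) : cyc a b c d = dec (mask a b c d) := by
  rw [mask, dec_or, dec_or, dec_or, dec_bit ha hb hab, dec_bit hb hc hbc, dec_bit hc hd hcd,
    dec_bit hd ha hda]
  rfl

/-- The masks of the 105 four-cycles on `{0, …, 6}`. -/
def cycles : List ℕ := [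
  198, 330, 396, 594, 660, 792, 1122, 1188, 1320, 1584, 2117, 2179, 4169, 4355, 6156, 6528,
  8273, 8707, 10260, 10880, 12312, 13056, 16481, 17411, 18468, 19584, 20520, 21760, 24624,
  26112, 32905, 33029, 34826, 35136, 36870, 37056, 65681, 66053, 67602, 68160, 73734, 73920,
  98328, 99072, 110592, 131233, 132101, 133154, 134208, 147462, 147648, 163880, 165120,
  184320, 196656, 198144, 221184, 262417, 262665, 266258, 266816, 270346, 270656, 294932,
  295552, 305152, 327692, 328064, 333824, 524577, 525321, 528418, 529472, 540682, 540992,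
  557092, 558208, 575488, 655372, 655744, 661504, 786480, 787968, 811008, 983040, 1049121,
  1049617, 1056802, 1057856, 1064978, 1065536, 1114148, 1115264, 1132544, 1179668, 1180288,
  1189888, 1310760, 1312000, 1331200, 1474560, 1572888, 1573632, 1585152, 1671168]

theorem cycles_lt : ∀ m ∈ cycles, m < 2 ^ 21 := by decide +kernel

theorem mask_mem_cycles : ∀ a b c d : Fin 7, a ≠ b → a ≠ c → a ≠ d → b ≠ c → b ≠ d → c ≠ d →
    mask a b c d ∈ cycles := by decide +kernel

theorem exists_mask {E : Finset (Sym2 ℕ)} (hE : IsCycle4 E) (hv : ∀ e ∈ E, ∀ v ∈ e, v < 7) :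
    ∃ m ∈ cycles, E = dec m := by
  obtain ⟨a, b, c, d, hab, hac, had, hbc, hbd, hcd, rfl⟩ := hE
  have ha : a < 7 := hv s(a, b) (by simp [cyc]) a (by simp)
  have hb : b < 7 := hv s(a, b) (by simp [cyc]) b (by simp)
  have hc : c < 7 := hv s(c, d) (by simp [cyc]) c (by simp)
  have hd : d < 7 := hv s(c, d) (by simp [cyc]) d (by simp)
  refine ⟨mask a b c d, ?_, cyc_eq_dec ha hb hc hd hab hbc hcd had.symm⟩
  exact mask_mem_cycles ⟨a, ha⟩ ⟨b, hb⟩ ⟨c, hc⟩ ⟨d, hd⟩ (by simpa [Fin.ext_iff])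
    (by simpa [Fin.ext_iff]) (by simpa [Fin.ext_iff]) (by simpa [Fin.ext_iff])
    (by simpa [Fin.ext_iff]) (by simpa [Fin.ext_iff])

/-! ### Relabelling vertices -/

/-- A relabelling of `{0, …, 6}` is written as the list of the images of `0, …, 6`. -/
def IsRenumbering (p : List ℕ) : Prop :=
  (∀ i : Fin 7, p.getD i 0 < 7) ∧ ∀ i j : Fin 7, p.getD i 0 = p.getD j 0 → i = j

instance (p : List ℕ) : Decidable (IsRenumbering p) := by unfold IsRenumbering; infer_instance

/-- The image of a mask under the relabelling `p`. -/
def permMask (p : List ℕ) (m : ℕ) : ℕ :=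
  (List.finRange 21).foldr (fun (i : Fin 21) acc => if m.testBit i then
    bit (p.getD (edgeAt i).1 0) (p.getD (edgeAt i).2 0) ||| acc else acc) 0

theorem exists_perm_of_isRenumbering {p : List ℕ} (hp : IsRenumbering p) :
    ∃ σ : Equiv.Perm ℕ, (∀ v < 7, σ v < 7) ∧
      ∀ m, (dec m).image (Sym2.map σ) = dec (permMask p m) := by
  obtain ⟨σ, hσ⟩ := Equiv.Perm.exists_extending_pair (fun i : Fin 7 => (i : ℕ))
    (fun i : Fin 7 => p.getD i 0) Fin.val_injective hp.2
  have hσ' : ∀ v < 7, σ v = p.getD v 0 := fun v hv => hσ ⟨v, hv⟩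
  have hlt : ∀ v < 7, σ v < 7 := fun v hv => hσ' v hv ▸ hp.1 ⟨v, hv⟩
  refine ⟨σ, hlt, fun m => ?_⟩
  have key : ∀ l : List (Fin 21), ∀ e, e ∈ dec (l.foldr (fun (i : Fin 21) acc => if m.testBit i then
      bit (p.getD (edgeAt i).1 0) (p.getD (edgeAt i).2 0) ||| acc else acc) 0) ↔
      ∃ i ∈ l, m.testBit i ∧ Sym2.map σ (edge i) = e := by
    intro l e
    induction l with
    | nil => simp [mem_dec]
    | cons i l ih =>
      obtain ⟨h1, h2⟩ := edge_lt i
      have h3 : σ (edgeAt i).1 ≠ σ (edgeAt i).2 := fun h => h1.ne (σ.injective h)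
      simp only [List.foldr_cons, List.mem_cons, exists_eq_or_imp]
      rw [← ih]
      by_cases hi : m.testBit i
      · rw [if_pos hi, dec_or, ← hσ' _ (h1.trans h2), ← hσ' _ h2,
          dec_bit (hlt _ (h1.trans h2)) (hlt _ h2) h3]
        simp only [mem_union, mem_singleton, hi, true_and, edge, Sym2.map_mk, eq_comm]
      · rw [if_neg hi]
        simp only [hi, Bool.false_eq_true, false_and, false_or]
  ext e
  rw [permMask, key]
  simp only [mem_image, mem_dec, List.mem_finRange, true_and]
  constructor
  · rintro ⟨_, ⟨i, hi, rfl⟩, rfl⟩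
    exact ⟨i, hi, rfl⟩
  · rintro ⟨i, hi, rfl⟩
    exact ⟨_, ⟨i, hi, rfl⟩, rfl⟩

/-! ### The finite search -/

/-- Relabellings preserving the cycle `(0, 1, 2, 3)`, whose mask is `2117`. -/
def stabilizers : List (List ℕ) := [
  [0, 1, 2, 3, 4, 5, 6], [0, 1, 2, 3, 4, 6, 5], [1, 0, 3, 2, 6, 5, 4], [1, 2, 3, 0, 4, 5, 6],
  [1, 2, 3, 0, 4, 6, 5], [2, 1, 0, 3, 6, 5, 4], [2, 1, 0, 3, 4, 6, 5], [3, 2, 1, 0, 5, 4, 6],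
  [0, 1, 2, 3, 5, 4, 6], [0, 3, 2, 1, 6, 5, 4], [1, 0, 3, 2, 4, 6, 5], [2, 1, 0, 3, 5, 4, 6],
  [3, 2, 1, 0, 6, 5, 4], [1, 0, 3, 2, 5, 4, 6], [2, 3, 0, 1, 4, 6, 5]]

/-- Masks of the cycles `(0, 4, 5, 6)`, `(0, 4, 1, 5)`, `(0, 2, 4, 5)`, `(0, 4, 2, 5)`. -/
def forms : List ℕ := [1310760, 792, 266258, 12312]

/-- A table of relabellings, sufficient to bring every normalized bitrade into one of the three
representatives. -/
def renumberings : List (List ℕ) := [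
  [0, 1, 2, 3, 4, 5, 6], [0, 1, 2, 3, 5, 4, 6], [0, 4, 1, 5, 2, 3, 6], [0, 5, 1, 4, 2, 3, 6],
  [1, 0, 3, 2, 4, 5, 6], [1, 0, 3, 2, 5, 4, 6], [1, 4, 0, 5, 3, 2, 6], [1, 5, 0, 4, 3, 2, 6],
  [1, 0, 3, 5, 4, 2, 6], [1, 0, 3, 5, 2, 4, 6], [1, 2, 3, 4, 0, 5, 6], [1, 2, 3, 4, 5, 0, 6],
  [1, 4, 3, 2, 0, 5, 6], [1, 4, 3, 2, 5, 0, 6], [1, 5, 3, 0, 4, 2, 6], [1, 5, 3, 0, 2, 4, 6],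
  [2, 1, 0, 3, 5, 4, 6], [2, 1, 0, 3, 6, 4, 5], [2, 3, 0, 1, 5, 4, 6], [2, 3, 0, 1, 6, 4, 5],
  [3, 2, 1, 0, 4, 6, 5], [3, 2, 1, 0, 5, 6, 4], [3, 2, 1, 4, 0, 5, 6], [3, 2, 1, 4, 5, 0, 6],
  [3, 0, 1, 2, 4, 6, 5], [3, 0, 1, 2, 5, 6, 4], [3, 0, 1, 5, 4, 2, 6], [3, 0, 1, 5, 2, 4, 6],
  [3, 4, 1, 2, 0, 5, 6], [3, 4, 1, 2, 5, 0, 6], [3, 4, 6, 5, 0, 1, 2], [3, 4, 6, 5, 2, 1, 0],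
  [3, 5, 1, 0, 4, 2, 6], [3, 5, 1, 0, 2, 4, 6], [3, 5, 6, 4, 0, 1, 2], [3, 5, 6, 4, 2, 1, 0]]

/-- Masks of the cycles of the three representatives. All of them contain the cycles
`(0, 1, 2, 3)` and `(0, 4, 1, 5)` in the first family. -/
def reps : List ((List ℕ) × (List ℕ)) := [
  ([2117, 792, 811008], [10260, 262665, 540992]),
  ([2117, 792, 1671168], [35136, 66053, 1572888]),
  ([2117, 792, 1056802], [330, 10260, 1049121])]

theorem stabilizers_isRenumbering : ∀ p ∈ stabilizers, IsRenumbering p := by decide +kernel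
theorem renumberings_isRenumbering : ∀ p ∈ renumberings, IsRenumbering p := by decide +kernel

/-- Up to a symmetry of the cycle `(0, 1, 2, 3)`, a cycle edge-disjoint from it has one of four
forms: it shares with it one vertex, or two vertices (which are opposite in at least one of the
two cycles). -/
theorem normalize : ∀ m ∈ cycles, 2117 &&& m = 0 →
    ∃ p ∈ stabilizers, permMask p 2117 = 2117 ∧ permMask p m ∈ forms := by
  decide +kernel

/-- The relabelling `p` carries the masks in `l` into those in `l'`. -/
def Carries (p l l' : List ℕ) : Prop := ∀ x ∈ l, permMask p x ∈ l'

instance (p l l' : List ℕ) : Decidable (Carries p l l') := by unfold Carries; infer_instance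

/-- Some relabelling in the table carries the pair `(l, l')` into one of the three
representatives, possibly with the two sides exchanged. -/
def Recognized (l l' : List ℕ) : Prop :=
  ∃ p ∈ renumberings, ∃ P ∈ reps,
    (Carries p l P.1 ∧ Carries p l' P.2) ∨ (Carries p l P.2 ∧ Carries p l' P.1)

instance (l l' : List ℕ) : Decidable (Recognized l l') := by unfold Recognized; infer_instance

/-- Every edge-disjoint family `b, c, d` of 4-cycles with edge set `U`, having no cycle in
common with the family `l`, forms with `l` a recognized pair. The cycle `b` is the one that
contains the edge `01`, which is bit `0` of the masks. -/
def Mates (l : List ℕ) (U : ℕ) : Prop :=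
  ∀ b ∈ cycles, b.testBit 0 → U ||| b = U → b ∉ l → ∀ c ∈ cycles, U ||| c = U → b &&& c = 0 → c ∉ l →
    ∀ d ∈ cycles, b ||| (c ||| d) = U → d ∉ l → Recognized l [b, c, d]

set_option synthInstance.maxSize 1024 in
instance (l : List ℕ) (U : ℕ) : Decidable (Mates l U) := by unfold Mates; infer_instance

/-- The normalized bitrades are recognized. The mask `1721376` consists of the edges at the vertex
`6`; the first two cycles leave at most this vertex uncovered. -/
theorem search : ∀ f ∈ forms, ∀ a ∈ cycles, 2117 &&& a = 0 → f &&& a = 0 →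
    (2117 ||| (f ||| a)) &&& 1721376 ≠ 0 → Mates [2117, f, a] (2117 ||| (f ||| a)) := by
  decide +kernel

/-! ### Isomorphisms of bitrades -/

theorem image_injective (σ : Equiv.Perm ℕ) :
    Function.Injective fun E : Finset (Sym2 ℕ) => E.image (Sym2.map σ) :=
  Finset.image_injective (Sym2.map.injective σ.injective)

theorem actP_mul (σ τ : Equiv.Perm ℕ) (T : Finset (Finset (Sym2 ℕ))) :
    actP (σ * τ) T = actP σ (actP τ T) := by
  simp only [actP, image_image]
  congr 1
  funext E
  simp only [Function.comp, image_image]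
  congr 1
  funext e
  simp [Sym2.map_map]

theorem card_actP (σ : Equiv.Perm ℕ) (T : Finset (Finset (Sym2 ℕ))) :
    (actP σ T).card = T.card :=
  card_image_of_injective _ (image_injective σ)

theorem edgesOf_actP (σ : Equiv.Perm ℕ) (T : Finset (Finset (Sym2 ℕ))) :
    edgesOf (actP σ T) = (edgesOf T).image (Sym2.map σ) := by
  simp only [edgesOf, actP, image_biUnion, biUnion_image, id]

theorem edgeDisjointFamily_actP {T : Finset (Finset (Sym2 ℕ))} (hT : EdgeDisjointFamily T)
    (σ : Equiv.Perm ℕ) : EdgeDisjointFamily (actP σ T) := by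
  constructor
  · intro E hE
    obtain ⟨E, hE', rfl⟩ := mem_image.1 hE
    obtain ⟨a, b, c, d, hab, hac, had, hbc, hbd, hcd, rfl⟩ := hT.1 E hE'
    refine ⟨σ a, σ b, σ c, σ d, ?_, ?_, ?_, ?_, ?_, ?_, ?_⟩
    any_goals simpa
    simp [cyc, image_insert]
  · intro E hE F hF hEF
    obtain ⟨E, hE', rfl⟩ := mem_image.1 hE
    obtain ⟨F, hF', rfl⟩ := mem_image.1 hF
    exact (disjoint_image (Sym2.map.injective σ.injective)).2
      (hT.2 hE' hF' fun h => hEF (by rw [h]))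

/-- The vertices covered by a family. -/
def verts (T : Finset (Finset (Sym2 ℕ))) : Set ℕ := {v | ∃ E ∈ T, ∃ e ∈ E, v ∈ e}

theorem mem_verts {T : Finset (Finset (Sym2 ℕ))} {v : ℕ} :
    v ∈ verts T ↔ ∃ e ∈ edgesOf T, v ∈ e := by
  simp only [verts, edgesOf, Set.mem_ofPred_eq, mem_biUnion, id]
  constructor
  · rintro ⟨E, hE, e, he, hv⟩
    exact ⟨e, ⟨E, hE, he⟩, hv⟩
  · rintro ⟨e, ⟨E, hE, he⟩, hv⟩
    exact ⟨E, hE, e, he, hv⟩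

theorem verts_actP (σ : Equiv.Perm ℕ) (T : Finset (Finset (Sym2 ℕ))) :
    verts (actP σ T) = σ '' verts T := by
  ext v
  simp only [mem_verts, edgesOf_actP, Set.mem_image, mem_image]
  constructor
  · rintro ⟨_, ⟨e, he, rfl⟩, hv⟩
    obtain ⟨w, hw, rfl⟩ := Sym2.mem_map.1 hv
    exact ⟨w, ⟨e, he, hw⟩, rfl⟩
  · rintro ⟨w, ⟨e, he, hw⟩, rfl⟩
    exact ⟨_, ⟨e, he, rfl⟩, Sym2.mem_map.2 ⟨w, hw, rfl⟩⟩

theorem isTrade37_actP {T1 T2 : Finset (Finset (Sym2 ℕ))} (h : IsTrade37 T1 T2)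
    (σ : Equiv.Perm ℕ) : IsTrade37 (actP σ T1) (actP σ T2) := by
  obtain ⟨⟨h1, h2, h3, h4⟩, h5, h6, h7⟩ := h
  refine ⟨⟨edgeDisjointFamily_actP h1 σ, edgeDisjointFamily_actP h2 σ, ?_, ?_⟩, ?_, ?_, ?_⟩
  · exact (disjoint_image (image_injective σ)).2 h3
  · rw [edgesOf_actP, edgesOf_actP, h4]
  · rw [card_actP, h5]
  · rw [card_actP, h6]
  · change (verts (actP σ T1)).ncard = 7
    rw [verts_actP, Set.ncard_image_of_injective _ σ.injective]
    exact h7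

theorem isoTrades_of_actP {T1 T2 : Finset (Finset (Sym2 ℕ))} {σ : Equiv.Perm ℕ}
    {Q : Finset (Finset (Sym2 ℕ)) × Finset (Finset (Sym2 ℕ))}
    (h : IsoTrades (actP σ T1, actP σ T2) Q) : IsoTrades (T1, T2) Q := by
  obtain ⟨τ, h⟩ := h
  exact ⟨τ * σ, by simpa only [actP_mul] using h⟩

/-! ### Families of masks -/

/-- The family of edge sets with masks in `l`. -/
def decL (l : List ℕ) : Finset (Finset (Sym2 ℕ)) := (l.map dec).toFinset

theorem mem_decL {l : List ℕ} {E : Finset (Sym2 ℕ)} : E ∈ decL l ↔ ∃ m ∈ l, dec m = E := by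
  simp [decL]

theorem edgesOf_decL (l : List ℕ) : edgesOf (decL l) = dec (l.foldr (· ||| ·) 0) := by
  induction l with
  | nil => ext e; simp [edgesOf, decL, mem_dec]
  | cons m l ih =>
    rw [List.foldr_cons, dec_or, ← ih]
    simp [edgesOf, decL]

theorem actP_decL_subset {p : List ℕ} {σ : Equiv.Perm ℕ}
    (hσ : ∀ m, (dec m).image (Sym2.map σ) = dec (permMask p m)) {l l' : List ℕ}
    (h : Carries p l l') : actP σ (decL l) ⊆ decL l' := by
  intro E hE
  obtain ⟨E, hE', rfl⟩ := mem_image.1 hE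
  obtain ⟨m, hm, rfl⟩ := mem_decL.1 hE'
  exact mem_decL.2 ⟨_, h m hm, (hσ m).symm⟩

theorem actP_decL_eq {p : List ℕ} {σ : Equiv.Perm ℕ}
    (hσ : ∀ m, (dec m).image (Sym2.map σ) = dec (permMask p m)) {l l' : List ℕ}
    (h : Carries p l l') (hl : (decL l).card = 3) (hl' : l'.length = 3) :
    actP σ (decL l) = decL l' := by
  refine eq_of_subset_of_card_le (actP_decL_subset hσ h) ?_
  rw [card_actP, hl, ← hl', ← List.length_map (f := dec)]
  exact List.toFinset_card_le _

theorem reps_length : ∀ P ∈ reps, P.1.length = 3 ∧ P.2.length = 3 := by decide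

/-! ### Normalization of an arbitrary bitrade -/

theorem dec_2117 : dec 2117 = cyc 0 1 2 3 := by
  rw [cyc_eq_dec (by norm_num) (by norm_num) (by norm_num) (by norm_num) (by norm_num)
    (by norm_num) (by norm_num) (by norm_num)]
  rfl

/-- The vertices of a bitrade can be relabelled by `0, …, 6` in such a way that a cycle of the
first family becomes `(0, 1, 2, 3)`. -/
theorem exists_first_cycle {T1 T2 : Finset (Finset (Sym2 ℕ))} (h : IsTrade37 T1 T2) :
    ∃ σ : Equiv.Perm ℕ, (∀ v ∈ verts (actP σ T1), v < 7) ∧ dec 2117 ∈ actP σ T1 := by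
  obtain ⟨⟨h1, -⟩, h5, -, h7⟩ := h
  obtain ⟨E, hE⟩ : T1.Nonempty := card_pos.1 (by omega)
  obtain ⟨a, b, c, d, hab, hac, had, hbc, hbd, hcd, rfl⟩ := h1.1 E hE
  have hfin : (verts T1).Finite := Set.finite_of_ncard_ne_zero (by
    change foundation T1 ≠ 0
    omega)
  have hcard : hfin.toFinset.card = 7 := by
    rw [← Set.ncard_eq_toFinset_card _ hfin]
    exact h7
  have hsub : ({a, b, c, d} : Finset ℕ) ⊆ hfin.toFinset := by
    intro v hv
    rw [Set.Finite.mem_toFinset]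
    simp only [mem_insert, mem_singleton] at hv
    rcases hv with rfl | rfl | rfl | rfl
    · exact ⟨_, hE, s(v, b), by simp [cyc], by simp⟩
    · exact ⟨_, hE, s(a, v), by simp [cyc], by simp⟩
    · exact ⟨_, hE, s(b, v), by simp [cyc], by simp⟩
    · exact ⟨_, hE, s(c, v), by simp [cyc], by simp⟩
  have h4 : ({a, b, c, d} : Finset ℕ).card = 4 := by
    simp [hab, hac, had, hbc, hbd, hcd]
  obtain ⟨x, y, z, hxy, hxz, hyz, hR⟩ : ∃ x y z, x ≠ y ∧ x ≠ z ∧ y ≠ z ∧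
      hfin.toFinset \ {a, b, c, d} = {x, y, z} := by
    rw [← card_eq_three, card_sdiff_of_subset hsub, hcard, h4]
  have hall : hfin.toFinset = univ.image ![a, b, c, d, x, y, z] := by
    rw [← union_sdiff_of_subset hsub, hR]
    ext v
    simp only [mem_union, mem_insert, mem_singleton, mem_image, mem_univ, true_and,
      Fin.exists_fin_succ]
    simp [eq_comm, or_assoc]
  have hinj : Function.Injective ![a, b, c, d, x, y, z] := by
    have : Set.InjOn ![a, b, c, d, x, y, z] (univ : Finset (Fin 7)) := by
      rw [← card_image_iff, ← hall, hcard]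
      rfl
    simpa [Set.injOn_univ] using this
  obtain ⟨σ, hσ⟩ := Equiv.Perm.exists_extending_pair ![a, b, c, d, x, y, z]
    (fun i : Fin 7 => (i : ℕ)) hinj Fin.val_injective
  refine ⟨σ, ?_, ?_⟩
  · rw [verts_actP]
    rintro _ ⟨v, hv, rfl⟩
    rw [← hfin.mem_toFinset, hall] at hv
    obtain ⟨i, -, rfl⟩ := mem_image.1 hv
    rw [hσ]
    exact i.2
  · refine mem_image.2 ⟨_, hE, ?_⟩
    have h0 : σ a = 0 := hσ 0
    have h1 : σ b = 1 := hσ 1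
    have h2 : σ c = 2 := hσ 2
    have h3 : σ d = 3 := hσ 3
    simp [dec_2117, cyc, image_insert, h0, h1, h2, h3]

theorem exists_mask_of_mem {T : Finset (Finset (Sym2 ℕ))} (hT : EdgeDisjointFamily T)
    (hv : ∀ v ∈ verts T, v < 7) {E : Finset (Sym2 ℕ)} (hE : E ∈ T) :
    ∃ m ∈ cycles, E = dec m :=
  exists_mask (hT.1 E hE) fun e he v hve => hv v ⟨E, hE, e, he, hve⟩

theorem exists_second_cycle {T1 T2 : Finset (Finset (Sym2 ℕ))} (h : IsTrade37 T1 T2)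
    (hv : ∀ v ∈ verts T1, v < 7) (h0 : dec 2117 ∈ T1) :
    ∃ σ : Equiv.Perm ℕ, (∀ v ∈ verts (actP σ T1), v < 7) ∧ dec 2117 ∈ actP σ T1 ∧
      ∃ f ∈ forms, dec f ∈ actP σ T1 := by
  obtain ⟨⟨h1, -⟩, h5, -⟩ := h
  obtain ⟨E, hE, hne⟩ := exists_mem_ne (by omega : 1 < T1.card) (dec 2117)
  obtain ⟨m, hm, rfl⟩ := exists_mask_of_mem h1 hv hE
  obtain ⟨p, hp, hp1, hp2⟩ := normalize m hm
    (land_eq_zero (by norm_num) (h1.2 h0 hE hne.symm))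
  obtain ⟨σ, hσ, hσ'⟩ := exists_perm_of_isRenumbering (stabilizers_isRenumbering p hp)
  refine ⟨σ, ?_, mem_image.2 ⟨_, h0, by rw [hσ', hp1]⟩, _, hp2, mem_image.2 ⟨_, hE, hσ' m⟩⟩
  rw [verts_actP]
  rintro _ ⟨v, hv', rfl⟩
  exact hσ v (hv v hv')

theorem forms_lt : ∀ f ∈ forms, f < 2 ^ 21 ∧ f ≠ 2117 := by decide

theorem recognize {T1 T2 : Finset (Finset (Sym2 ℕ))} (h : IsTrade37 T1 T2)
    (hv : ∀ v ∈ verts T1, v < 7) (h0 : dec 2117 ∈ T1) {f : ℕ} (hf : f ∈ forms)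
    (hfT : dec f ∈ T1) : ∃ P ∈ reps, IsoTrades (T1, T2) (decL P.1, decL P.2) := by
  obtain ⟨⟨h1, h2, h3, h4⟩, h5, h6, h7⟩ := h
  have hv2 : ∀ v ∈ verts T2, v < 7 := fun v hv' => hv v (by
    rw [mem_verts] at hv' ⊢
    rwa [h4])
  obtain ⟨hf21, hf0⟩ := forms_lt f hf
  have hne : dec f ≠ dec 2117 := fun h => hf0 (dec_injOn hf21 (by norm_num) h)
  -- the masks of the remaining cycles
  obtain ⟨A, hA⟩ : ∃ A, (T1.erase (dec 2117)).erase (dec f) = {A} := by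
    rw [← card_eq_one, card_erase_of_mem (mem_erase.2 ⟨hne, hfT⟩), card_erase_of_mem h0, h5]
  have hAm : A ∈ (T1.erase (dec 2117)).erase (dec f) := by rw [hA]; exact mem_singleton_self A
  rw [mem_erase, mem_erase] at hAm
  obtain ⟨hAf, hA0, hAT⟩ := hAm
  obtain ⟨a, ha, rfl⟩ := exists_mask_of_mem h1 hv hAT
  have hT1 : T1 = decL [2117, f, a] := by
    rw [← insert_erase h0, ← insert_erase (mem_erase.2 ⟨hne, hfT⟩), hA]
    simp [decL]
  have h01 : edge 0 ∈ edgesOf T2 := by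
    rw [← h4]
    exact mem_biUnion.2 ⟨_, h0, edge_mem_dec.2 (by decide)⟩
  obtain ⟨B, hBT, hB⟩ := mem_biUnion.1 h01
  obtain ⟨C, D, hCD, hE⟩ := card_eq_two.1 (by rw [card_erase_of_mem hBT, h6] :
    (T2.erase B).card = 2)
  have hC : C ∈ T2.erase B := by rw [hE]; simp
  have hD : D ∈ T2.erase B := by rw [hE]; simp
  rw [mem_erase] at hC hD
  obtain ⟨b, hb, rfl⟩ := exists_mask_of_mem h2 hv2 hBT
  obtain ⟨c, hc, rfl⟩ := exists_mask_of_mem h2 hv2 hC.2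
  obtain ⟨d, hd, rfl⟩ := exists_mask_of_mem h2 hv2 hD.2
  have hT2 : T2 = decL [b, c, d] := by
    rw [← insert_erase hBT, hE]
    simp [decL]
  -- the common edge set
  have hU : b ||| (c ||| d) = 2117 ||| (f ||| a) := by
    have := h4
    rw [hT1, hT2, edgesOf_decL, edgesOf_decL] at this
    simp only [List.foldr_cons, List.foldr_nil, Nat.or_zero] at this
    have hlt := @Nat.or_lt_two_pow
    exact (dec_injOn (hlt (by norm_num) (hlt hf21 (cycles_lt a ha)))
      (hlt (cycles_lt b hb) (hlt (cycles_lt c hc) (cycles_lt d hd))) this).symm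
  have hnot : ∀ m, dec m ∈ T2 → m ∉ [2117, f, a] := fun m hm hm' =>
    disjoint_left.1 h3 (by rw [hT1]; exact mem_decL.2 ⟨m, hm', rfl⟩) hm
  have h6v : (2117 ||| (f ||| a)) &&& 1721376 ≠ 0 := by
    have hvs : verts T1 = Set.Iio 7 := by
      refine Set.eq_of_subset_of_ncard_le hv ?_ (Set.finite_Iio 7)
      rw [show (verts T1).ncard = 7 from h7, Set.ncard_eq_toFinset_card']
      simp
    have h6m : 6 ∈ verts T1 := by rw [hvs]; simp
    obtain ⟨e, he, h6e⟩ := mem_verts.1 h6m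
    rw [hT1, edgesOf_decL] at he
    simp only [List.foldr_cons, List.foldr_nil, Nat.or_zero] at he
    obtain ⟨i, hi, rfl⟩ := mem_dec.1 he
    have hstar : ∀ i : Fin 21, 6 ∈ edge i → Nat.testBit 1721376 i := by decide +kernel
    intro hz
    have := congrArg (fun x => Nat.testBit x i) hz
    rw [Nat.testBit_and, hi, hstar i h6e] at this
    simp at this
  obtain ⟨p, hp, P, hP, hc'⟩ : Recognized [2117, f, a] [b, c, d] := by
    refine search f hf a ha (land_eq_zero (by norm_num) (h1.2 h0 hAT hA0.symm))
      (land_eq_zero hf21 (h1.2 hfT hAT hAf.symm)) h6v b hb (edge_mem_dec.1 hB) ?_ (hnot b hBT)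
      c hc ?_ (land_eq_zero (cycles_lt b hb) (h2.2 hBT hC.2 hC.1.symm)) (hnot c hC.2)
      d hd hU (hnot d hD.2)
    all_goals
      rw [← hU]
      refine Nat.eq_of_testBit_eq fun k => ?_
      simp only [Nat.testBit_or]
      cases b.testBit k <;> cases c.testBit k <;> simp
  obtain ⟨σ, -, hσ⟩ := exists_perm_of_isRenumbering (renumberings_isRenumbering p hp)
  obtain ⟨hl1, hl2⟩ := reps_length P hP
  refine ⟨P, hP, σ, ?_⟩
  rw [hT1] at h5 ⊢
  rw [hT2] at h6 ⊢
  exact hc'.imp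
    (fun h => ⟨actP_decL_eq hσ h.1 h5 hl1, actP_decL_eq hσ h.2 h6 hl2⟩)
    (fun h => ⟨actP_decL_eq hσ h.1 h5 hl2, actP_decL_eq hσ h.2 h6 hl1⟩)

theorem classification {T1 T2 : Finset (Finset (Sym2 ℕ))} (h : IsTrade37 T1 T2) :
    ∃ P ∈ reps, IsoTrades (T1, T2) (decL P.1, decL P.2) := by
  obtain ⟨σ, hv, h0⟩ := exists_first_cycle h
  have h' := isTrade37_actP h σ
  obtain ⟨τ, hv', h0', f, hf, hfT⟩ := exists_second_cycle h' hv h0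
  obtain ⟨P, hP, hiso⟩ := recognize (isTrade37_actP h' τ) hv' h0' hf hfT
  exact ⟨P, hP, isoTrades_of_actP (isoTrades_of_actP hiso)⟩

/-! ### The representatives are bitrades -/

theorem reps_cycles : ∀ P ∈ reps, ∀ m ∈ P.1 ++ P.2, m < 2 ^ 21 ∧
    ∃ a b : Fin 7, m &&& bit a b ≠ 0 ∧ ∃ c : Fin 7, m &&& bit b c ≠ 0 ∧ ∃ d : Fin 7,
      m = mask a b c d ∧ a ≠ b ∧ a ≠ c ∧ a ≠ d ∧ b ≠ c ∧ b ≠ d ∧ c ≠ d := by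
  decide +kernel

theorem isCycle4_reps {P : List ℕ × List ℕ} (hP : P ∈ reps) {m : ℕ} (hm : m ∈ P.1 ++ P.2) :
    IsCycle4 (dec m) := by
  obtain ⟨-, a, b, -, c, -, d, rfl, hab, hac, had, hbc, hbd, hcd⟩ := reps_cycles P hP m hm
  simp only [ne_eq, Fin.ext_iff] at hab hac had hbc hbd hcd
  exact ⟨a, b, c, d, hab, hac, had, hbc, hbd, hcd,
    (cyc_eq_dec a.2 b.2 c.2 d.2 hab hbc hcd (Ne.symm had)).symm⟩

theorem edgeDisjointFamily_decL {l : List ℕ} (h1 : ∀ m ∈ l, IsCycle4 (dec m))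
    (h2 : ∀ x ∈ l, ∀ y ∈ l, x ≠ y → x &&& y = 0) : EdgeDisjointFamily (decL l) := by
  constructor
  · intro E hE
    obtain ⟨m, hm, rfl⟩ := mem_decL.1 hE
    exact h1 m hm
  · intro E hE F hF hEF
    obtain ⟨m, hm, rfl⟩ := mem_decL.1 hE
    obtain ⟨n, hn, rfl⟩ := mem_decL.1 hF
    exact disjoint_dec (h2 m hm n hn fun h => hEF (by rw [h]))

theorem card_decL {l : List ℕ} (h1 : ∀ m ∈ l, m < 2 ^ 21) (h2 : l.Nodup) :
    (decL l).card = l.length := by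
  rw [decL, List.toFinset_card_of_nodup, List.length_map]
  exact (List.nodup_map_iff_inj_on h2).2 fun x hx y hy h => dec_injOn (h1 x hx) (h1 y hy) h

theorem reps_facts : ∀ P ∈ reps, P.1.Nodup ∧ P.2.Nodup ∧
    (∀ x ∈ P.1, ∀ y ∈ P.1, x ≠ y → x &&& y = 0) ∧
    (∀ x ∈ P.2, ∀ y ∈ P.2, x ≠ y → x &&& y = 0) ∧
    (∀ x ∈ P.1, ∀ y ∈ P.2, x ≠ y) ∧
    P.1.foldr (· ||| ·) 0 = P.2.foldr (· ||| ·) 0 ∧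
    ∀ v : Fin 7, ∃ i : Fin 21, (P.1.foldr (· ||| ·) 0).testBit i ∧ (v : ℕ) ∈ edge i := by
  decide +kernel

theorem isTrade37_reps {P : List ℕ × List ℕ} (hP : P ∈ reps) :
    IsTrade37 (decL P.1) (decL P.2) := by
  obtain ⟨hn1, hn2, hd1, hd2, hne, hU, hcov⟩ := reps_facts P hP
  obtain ⟨hl1, hl2⟩ := reps_length P hP
  have hlt1 : ∀ m ∈ P.1, m < 2 ^ 21 := fun m hm =>
    (reps_cycles P hP m (List.mem_append_left _ hm)).1
  have hlt2 : ∀ m ∈ P.2, m < 2 ^ 21 := fun m hm =>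
    (reps_cycles P hP m (List.mem_append_right _ hm)).1
  refine ⟨⟨edgeDisjointFamily_decL (fun m hm => isCycle4_reps hP (List.mem_append_left _ hm)) hd1,
    edgeDisjointFamily_decL (fun m hm => isCycle4_reps hP (List.mem_append_right _ hm)) hd2,
    ?_, ?_⟩, ?_, ?_, ?_⟩
  · rw [disjoint_left]
    intro E hE hE'
    obtain ⟨m, hm, rfl⟩ := mem_decL.1 hE
    obtain ⟨n, hn, h⟩ := mem_decL.1 hE'
    exact hne m hm n hn (dec_injOn (hlt1 m hm) (hlt2 n hn) h.symm)
  · rw [edgesOf_decL, edgesOf_decL, hU]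
  · rw [card_decL hlt1 hn1, hl1]
  · rw [card_decL hlt2 hn2, hl2]
  · have : verts (decL P.1) = Set.Iio 7 := by
      ext v
      rw [mem_verts, edgesOf_decL, Set.mem_Iio]
      constructor
      · rintro ⟨e, he, hv⟩
        exact lt_of_mem_dec he hv
      · intro hv
        obtain ⟨i, hi, hvi⟩ := hcov ⟨v, hv⟩
        exact ⟨edge i, edge_mem_dec.2 hi, hvi⟩
    change (verts (decL P.1)).ncard = 7
    rw [this, Set.ncard_eq_toFinset_card']
    simp

/-! ### The representatives are pairwise non-isomorphic -/

/-- The number of ordered triangles (six times the number of triangles) of the graph with edge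
set `E`. -/
noncomputable def triangles (E : Finset (Sym2 ℕ)) : ℕ :=
  {t : ℕ × ℕ × ℕ | s(t.1, t.2.1) ∈ E ∧ s(t.2.1, t.2.2) ∈ E ∧ s(t.1, t.2.2) ∈ E}.ncard

theorem triangles_image (σ : Equiv.Perm ℕ) (E : Finset (Sym2 ℕ)) :
    triangles (E.image (Sym2.map σ)) = triangles E := by
  symm
  rw [triangles, triangles, ← Set.ncard_image_of_injective _
    (σ.injective.prodMap (σ.injective.prodMap σ.injective))]
  congr 1
  have key : ∀ a b, s(σ a, σ b) ∈ E.image (Sym2.map σ) ↔ s(a, b) ∈ E := fun a b =>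
    (Sym2.map.injective σ.injective).mem_finset_image (a := s(a, b))
  ext ⟨x, y, z⟩
  obtain ⟨x, rfl⟩ := σ.surjective x
  obtain ⟨y, rfl⟩ := σ.surjective y
  obtain ⟨z, rfl⟩ := σ.surjective z
  simp only [Set.mem_ofPred_eq, key]
  simp

theorem triangles_eq_of_iso {P Q : List ℕ × List ℕ} (hQ : Q ∈ reps)
    (h : IsoTrades (decL P.1, decL P.2) (decL Q.1, decL Q.2)) :
    triangles (edgesOf (decL P.1)) = triangles (edgesOf (decL Q.1)) := by
  obtain ⟨σ, ⟨h, -⟩ | ⟨h, -⟩⟩ := h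
  · simp only at h
    rw [← h, edgesOf_actP, triangles_image]
  · simp only at h
    rw [(isTrade37_reps hQ).1.2.2.2, ← h, edgesOf_actP, triangles_image]

theorem triangles_dec (m : ℕ) : triangles (dec m) =
    ((range 7 ×ˢ range 7 ×ˢ range 7).filter fun t : ℕ × ℕ × ℕ =>
      s(t.1, t.2.1) ∈ dec m ∧ s(t.2.1, t.2.2) ∈ dec m ∧ s(t.1, t.2.2) ∈ dec m).card := by
  rw [triangles, ← Set.ncard_coe_finset]
  congr 1
  ext ⟨x, y, z⟩
  simp only [Set.mem_ofPred_eq, coe_filter, mem_product, mem_range]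
  refine ⟨fun h => ⟨⟨?_, ?_, ?_⟩, h⟩, fun h => h.2⟩
  · exact lt_of_mem_dec h.1 (Sym2.mem_mk_left _ _)
  · exact lt_of_mem_dec h.1 (Sym2.mem_mk_right _ _)
  · exact lt_of_mem_dec h.2.1 (Sym2.mem_mk_right _ _)

/-- The representatives have 5, 4 and 7 triangles, each counted six times. -/
theorem triangles_reps :
    triangles (edgesOf (decL [2117, 792, 811008])) = 30 ∧
    triangles (edgesOf (decL [2117, 792, 1671168])) = 24 ∧
    triangles (edgesOf (decL [2117, 792, 1056802])) = 42 := by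
  simp only [edgesOf_decL, triangles_dec]
  decide +kernel

end Trade37

open Trade37

theorem exactly_three_trades_volume3_foundation7 :
    ∃ P1 P2 P3 : Finset (Finset (Sym2 ℕ)) × Finset (Finset (Sym2 ℕ)),
      IsTrade37 P1.1 P1.2 ∧ IsTrade37 P2.1 P2.2 ∧ IsTrade37 P3.1 P3.2 ∧
      ¬ IsoTrades P1 P2 ∧ ¬ IsoTrades P1 P3 ∧ ¬ IsoTrades P2 P3 ∧
      ∀ T1 T2 : Finset (Finset (Sym2 ℕ)), IsTrade37 T1 T2 →
        IsoTrades (T1, T2) P1 ∨ IsoTrades (T1, T2) P2 ∨ IsoTrades (T1, T2) P3 := by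
  obtain ⟨t1, t2, t3⟩ := triangles_reps
  refine ⟨(decL [2117, 792, 811008], decL [10260, 262665, 540992]),
    (decL [2117, 792, 1671168], decL [35136, 66053, 1572888]),
    (decL [2117, 792, 1056802], decL [330, 10260, 1049121]),
    isTrade37_reps (P := (_, _)) (by simp [reps]), isTrade37_reps (P := (_, _)) (by simp [reps]),
    isTrade37_reps (P := (_, _)) (by simp [reps]), fun h => ?_, fun h => ?_, fun h => ?_,
    fun T1 T2 h => ?_⟩
  · have := triangles_eq_of_iso (P := (_, _)) (Q := (_, _)) (by simp [reps]) h
    simp [t1, t2] at this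
  · have := triangles_eq_of_iso (P := (_, _)) (Q := (_, _)) (by simp [reps]) h
    simp [t1, t3] at this
  · have := triangles_eq_of_iso (P := (_, _)) (Q := (_, _)) (by simp [reps]) h
    simp [t2, t3] at this
  · obtain ⟨P, hP, hiso⟩ := classification h
    simp only [reps, List.mem_cons, List.not_mem_nil, or_false] at hP
    rcases hP with rfl | rfl | rfl
    · exact Or.inl hiso
    · exact Or.inr (Or.inl hiso)
    · exact Or.inr (Or.inr hiso)
end
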